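/- (Theorem 4, item 2.2) Suppose eTRS satisfies the Slater condition and (t*, λ*) with λ* ≥ 0 maximizes k(t,λ) := (Δ+1)λmin(D(t,λ)) − t − λc over t ∈ ℝ, λ ≥ 0, with λmin(D(t*,λ*)) = λmin(A). Let y = (y0, z0) ∈ ℝ × ℝⁿ be a unit-norm eigenvector of D(t*,λ*) corresponding to λmin(D(t*,λ*)) with y0 ≠ 0, and set x* := z0 / y0. Assume it is NOT the case that [λmin(A) < 0 is a simple eigenvalue of A, λ* > 0, and the system (A − λmin(A)·I)x = a − (λ*/2)b has two solutions x1, x2 with ‖x1‖² = Δ, ‖x2‖² = Δ and (bᵀx1 − c)(bᵀx2 − c) < 0]. Then strong duality holds for eTRS (p* = d*), and there exists z ∈ Null(A − λmin(A)·I) such that x* + z is a global optimal solution of eTRS. -/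

import Mathlib

open Matrix

/-- The smallest eigenvalue of a real (symmetric) matrix. -/
noncomputable def lambdaMin {ι : Type} [Fintype ι] (M : Matrix ι ι ℝ) : ℝ :=
  sInf {μ : ℝ | ∃ v : ι → ℝ, v ≠ 0 ∧ M.mulVec v = μ • v}

/-- The multiplicity of the smallest eigenvalue: the dimension of Null(M - λmin(M)·I). -/
noncomputable def eigMult {ι : Type} [Fintype ι] [DecidableEq ι] (M : Matrix ι ι ℝ) : ℕ :=
  Module.finrank ℝ (LinearMap.ker (M - lambdaMin M • (1 : Matrix ι ι ℝ)).mulVecLin)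

/-- The bordered matrix D(t) = [[t, -aᵀ],[-a, A]]. -/
noncomputable def borderD {n : ℕ} (A : Matrix (Fin n) (Fin n) ℝ) (a : Fin n → ℝ) (t : ℝ) :
    Matrix (Unit ⊕ Fin n) (Unit ⊕ Fin n) ℝ :=
  Matrix.fromBlocks (Matrix.of fun (_ : Unit) (_ : Unit) => t)
    (Matrix.of fun (_ : Unit) (j : Fin n) => -a j)
    (Matrix.of fun (i : Fin n) (_ : Unit) => -a i) A

/-- The bordered matrix D(t,λ) = [[t, (-a + (λ/2)b)ᵀ],[-a + (λ/2)b, A]]. -/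
noncomputable def borderD2 {n : ℕ} (A : Matrix (Fin n) (Fin n) ℝ) (a b : Fin n → ℝ)
    (t l : ℝ) : Matrix (Unit ⊕ Fin n) (Unit ⊕ Fin n) ℝ :=
  borderD A (fun j => a j - (l / 2) * b j) t

/-- The objective xᵀAx - 2aᵀx. -/
noncomputable def objQ {n : ℕ} (A : Matrix (Fin n) (Fin n) ℝ) (a : Fin n → ℝ)
    (x : Fin n → ℝ) : ℝ :=
  x ⬝ᵥ A.mulVec x - 2 * (a ⬝ᵥ x)

/-- The optimal value p* of eTRS. -/
noncomputable def pstar {n : ℕ} (A : Matrix (Fin n) (Fin n) ℝ) (a b : Fin n → ℝ)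
    (c Δ : ℝ) : ℝ :=
  sInf {v : ℝ | ∃ x : Fin n → ℝ, x ⬝ᵥ x ≤ Δ ∧ b ⬝ᵥ x ≤ c ∧ v = objQ A a x}

/-- The Lagrangian of eTRS. -/
noncomputable def lagr {n : ℕ} (A : Matrix (Fin n) (Fin n) ℝ) (a b : Fin n → ℝ)
    (c Δ : ℝ) (x : Fin n → ℝ) (l1 l2 : ℝ) : ℝ :=
  objQ A a x + l1 * (x ⬝ᵥ x - Δ) + l2 * (b ⬝ᵥ x - c)

/-- The Lagrangian dual value d* of eTRS:
the supremum over λ1, λ2 ≥ 0 of inf_x of the Lagrangian, encoded as the supremum of all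
values that are lower bounds of the Lagrangian for some admissible multipliers. -/
noncomputable def dstar {n : ℕ} (A : Matrix (Fin n) (Fin n) ℝ) (a b : Fin n → ℝ)
    (c Δ : ℝ) : ℝ :=
  sSup {v : ℝ | ∃ l1 l2 : ℝ, 0 ≤ l1 ∧ 0 ≤ l2 ∧ ∀ x : Fin n → ℝ, v ≤ lagr A a b c Δ x l1 l2}

/-- x is a global optimal solution of eTRS. -/
def isOptimal {n : ℕ} (A : Matrix (Fin n) (Fin n) ℝ) (a b : Fin n → ℝ)
    (c Δ : ℝ) (x : Fin n → ℝ) : Prop :=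
  x ⬝ᵥ x ≤ Δ ∧ b ⬝ᵥ x ≤ c ∧
    ∀ y : Fin n → ℝ, y ⬝ᵥ y ≤ Δ → b ⬝ᵥ y ≤ c → objQ A a x ≤ objQ A a y

/-- The dual objective k(t,λ) = (Δ+1)·λmin(D(t,λ)) - t - λc. -/
noncomputable def ktl {n : ℕ} (A : Matrix (Fin n) (Fin n) ℝ) (a b : Fin n → ℝ)
    (c Δ : ℝ) (t l : ℝ) : ℝ :=
  (Δ + 1) * lambdaMin (borderD2 A a b t l) - t - l * c
/-!
For symmetric `M`, `lambdaMin M` is the minimum of `tr (M Y)` over the spectraplex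
`{Y | Y.PosSemidef ∧ tr Y = 1}`, so `ktl` is a minimum of functions affine in `(t, l)`. By Sion's
minimax theorem a maximizer of `ktl` already maximizes one of these functions, the one of some `Y`;
reading off the signs of its coefficients shows that `Y₀₀ = 1 / (Δ + 1)` and that the first column
of `Y`, divided by `Y₀₀`, is feasible and satisfies stationarity and the complementary slackness of
the half-space. When `lambdaMin A < 0` the slackness of the ball may fail; it is repaired by sliding
along `Null (A - lambdaMin A • 1)` to the sphere. A direction orthogonal to `b` makes this possible,
and so does any `d` with `b ⬝ᵥ d ≤ 0` if the multiplier of the half-space vanishes. The remaining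
case is the exceptional one: the two points where the line of solutions meets the sphere lie
strictly on opposite sides of the hyperplane `b ⬝ᵥ x = c`.
-/


section LambdaMin

variable {ι : Type} [Fintype ι]

theorem mem_spectrum_iff_exists_mulVec_eq_smul [DecidableEq ι] {K : Type*} [Field K]
    {M : Matrix ι ι K} {μ : K} : μ ∈ spectrum K M ↔ ∃ v, v ≠ 0 ∧ M *ᵥ v = μ • v := by
  rw [← Matrix.spectrum_toLin', ← Module.End.hasEigenvalue_iff_mem_spectrum]
  refine ⟨fun h ↦ ?_, fun ⟨v, hv, hMv⟩ ↦ ?_⟩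
  · obtain ⟨v, hv⟩ := h.exists_hasEigenvector
    exact ⟨v, hv.2, hv.apply_eq_smul⟩
  · exact Module.End.hasEigenvalue_of_hasEigenvector
      ⟨Module.End.mem_eigenspace_iff.2 hMv, hv⟩

variable {M : Matrix ι ι ℝ}

theorem isLeast_lambdaMin [DecidableEq ι] [Nonempty ι] (hM : M.IsHermitian) :
    IsLeast (spectrum ℝ M) (lambdaMin M) := by
  have lambdaMin_eq : lambdaMin M = sInf (spectrum ℝ M) :=
    congrArg sInf (Set.ext fun _ ↦ mem_spectrum_iff_exists_mulVec_eq_smul.symm)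
  rw [lambdaMin_eq]
  exact M.finite_real_spectrum.isCompact.isLeast_sInf
    ⟨_, hM.eigenvalues_mem_spectrum_real (Classical.arbitrary ι)⟩

theorem exists_mulVec_eq_lambdaMin_smul [Nonempty ι] (hM : M.IsHermitian) :
    ∃ v, v ≠ 0 ∧ M *ᵥ v = lambdaMin M • v := by
  classical
  exact mem_spectrum_iff_exists_mulVec_eq_smul.1 (isLeast_lambdaMin hM).1

theorem posSemidef_sub_lambdaMin_smul_one [DecidableEq ι] (hM : M.IsHermitian) :
    (M - lambdaMin M • (1 : Matrix ι ι ℝ)).PosSemidef := by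
  cases isEmpty_or_nonempty ι
  · rw [Subsingleton.elim (M - _) 0]
    exact .zero
  have hsub : (M - lambdaMin M • (1 : Matrix ι ι ℝ)).IsHermitian :=
    hM.sub (isHermitian_one.smul (IsSelfAdjoint.all _))
  refine Matrix.posSemidef_iff_isHermitian_and_spectrum_nonneg.2 ⟨hsub, fun μ hμ ↦ ?_⟩
  rw [← Algebra.algebraMap_eq_smul_one, ← spectrum.sub_singleton_eq] at hμ
  obtain ⟨ν, hν, _, rfl, rfl⟩ := Set.mem_sub.1 hμ
  exact sub_nonneg.2 ((isLeast_lambdaMin hM).2 hν)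

theorem lambdaMin_nonpos_of_not_posDef (hM : M.IsHermitian) (hpd : ¬ M.PosDef) :
    lambdaMin M ≤ 0 := by
  classical
  contrapose! hpd
  simpa using PosDef.posSemidef_add (posSemidef_sub_lambdaMin_smul_one hM) (PosDef.one.smul hpd)

end LambdaMin

section Spectraplex

variable {ι : Type*}

theorem sq_apply_le_mul_diag_of_posSemidef {Y : Matrix ι ι ℝ} (hY : Y.PosSemidef) (i j : ι) :
    Y i j ^ 2 ≤ Y i i * Y j j := by
  have hdet := (hY.submatrix ![i, j]).det_nonneg
  have hsymm : Y j i = Y i j := hY.isHermitian.apply i j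
  rw [det_fin_two] at hdet
  simp only [submatrix_apply, cons_val_zero, cons_val_one, hsymm] at hdet
  linarith [sq (Y i j)]

theorem isClosed_setOf_posSemidef [Finite ι] : IsClosed {Y : Matrix ι ι ℝ | Y.PosSemidef} := by
  cases nonempty_fintype ι
  simp only [posSemidef_iff_dotProduct_mulVec, IsHermitian, Set.ofPred_and, Set.ofPred_forall]
  exact (isClosed_eq (by fun_prop) (by fun_prop)).inter
    (isClosed_iInter fun x ↦ isClosed_le (by fun_prop) (by fun_prop))

variable [Fintype ι]

variable (ι) in
/-- The spectraplex: the positive semidefinite real matrices of trace one. The smallest eigenvalue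
of a symmetric matrix `M` is the minimum of the linear form `Y ↦ tr (M Y)` over it. -/
def spectraplex : Set (Matrix ι ι ℝ) :=
  {Y | Y.PosSemidef ∧ Y.trace = 1}

theorem convex_spectraplex : Convex ℝ (spectraplex ι) := by
  rintro X ⟨hX, hXtr⟩ Y ⟨hY, hYtr⟩ α β hα hβ hαβ
  refine ⟨(hX.smul hα).add (hY.smul hβ), ?_⟩
  rw [trace_add, trace_smul, trace_smul, hXtr, hYtr, smul_eq_mul, smul_eq_mul, mul_one, mul_one,
    hαβ]

theorem abs_apply_le_one_of_mem_spectraplex {Y : Matrix ι ι ℝ} (hY : Y ∈ spectraplex ι) (i j : ι) :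
    |Y i j| ≤ 1 := by
  have diag_le_one (k : ι) : Y k k ≤ 1 := hY.2 ▸
    Finset.single_le_sum (f := fun k ↦ Y k k) (fun _ _ ↦ hY.1.diag_nonneg) (Finset.mem_univ k)
  exact (sq_le_one_iff_abs_le_one _).1 ((sq_apply_le_mul_diag_of_posSemidef hY.1 i j).trans
    (mul_le_one₀ (diag_le_one i) hY.1.diag_nonneg (diag_le_one j)))

theorem isCompact_spectraplex : IsCompact (spectraplex ι) := by
  have bounded : IsCompact (Set.univ.pi fun _ : ι ↦ Set.univ.pi fun _ : ι ↦ Set.Icc (-1 : ℝ) 1) :=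
    isCompact_univ_pi fun _ ↦ isCompact_univ_pi fun _ ↦ isCompact_Icc
  refine bounded.of_isClosed_subset
    (isClosed_setOf_posSemidef.inter (isClosed_eq (by fun_prop) (by fun_prop)))
    fun Y hY i _ j _ ↦ abs_le.1 (abs_apply_le_one_of_mem_spectraplex hY i j)

end Spectraplex

section TraceMul

variable {ι 𝕜 : Type*} [Fintype ι] [RCLike 𝕜] {M Y : Matrix ι ι 𝕜}

open scoped ComplexOrder MatrixOrder in
theorem exists_eq_conjTranspose_mul_self_of_posSemidef (hM : M.PosSemidef) :
    ∃ B : Matrix ι ι 𝕜, M = Bᴴ * B := by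
  classical
  exact CStarAlgebra.nonneg_iff_eq_star_mul_self.1 hM.nonneg

theorem trace_conjTranspose_mul_self_mul_conjTranspose_mul_self {m n p R : Type*} [Fintype m]
    [Fintype n] [Fintype p] [CommSemiring R] [StarRing R] (B : Matrix m n R) (C : Matrix p n R) :
    ((Bᴴ * B) * (Cᴴ * C)).trace = ((B * Cᴴ)ᴴ * (B * Cᴴ)).trace := by
  rw [conjTranspose_mul, conjTranspose_conjTranspose, ← Matrix.mul_assoc, trace_mul_comm]
  simp only [Matrix.mul_assoc]

open scoped ComplexOrder in
theorem trace_mul_nonneg_of_posSemidef (hM : M.PosSemidef) (hY : Y.PosSemidef) :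
    0 ≤ (M * Y).trace := by
  obtain ⟨B, rfl⟩ := exists_eq_conjTranspose_mul_self_of_posSemidef hM
  obtain ⟨C, rfl⟩ := exists_eq_conjTranspose_mul_self_of_posSemidef hY
  rw [trace_conjTranspose_mul_self_mul_conjTranspose_mul_self]
  exact (posSemidef_conjTranspose_mul_self _).trace_nonneg

open scoped ComplexOrder in
theorem mul_eq_zero_of_posSemidef_of_trace_mul_eq_zero (hM : M.PosSemidef) (hY : Y.PosSemidef)
    (h : (M * Y).trace = 0) : M * Y = 0 := by
  obtain ⟨B, rfl⟩ := exists_eq_conjTranspose_mul_self_of_posSemidef hM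
  obtain ⟨C, rfl⟩ := exists_eq_conjTranspose_mul_self_of_posSemidef hY
  rw [trace_conjTranspose_mul_self_mul_conjTranspose_mul_self,
    trace_conjTranspose_mul_self_eq_zero_iff] at h
  rw [Matrix.mul_assoc, ← Matrix.mul_assoc B, h, Matrix.zero_mul, Matrix.mul_zero]

end TraceMul

section TraceMulSpectraplex

variable {ι : Type} [Fintype ι] {M Y : Matrix ι ι ℝ}

theorem trace_sub_smul_one_mul [DecidableEq ι] (μ : ℝ) (hY : Y.trace = 1) :
    ((M - μ • (1 : Matrix ι ι ℝ)) * Y).trace = (M * Y).trace - μ := by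
  rw [Matrix.sub_mul, Matrix.smul_mul, Matrix.one_mul, trace_sub, trace_smul, hY, smul_eq_mul,
    mul_one]

theorem isLeast_trace_mul_spectraplex [Nonempty ι] (hM : M.IsHermitian) :
    IsLeast ((fun Y ↦ (M * Y).trace) '' spectraplex ι) (lambdaMin M) := by
  classical
  constructor
  · obtain ⟨v, hv, hMv⟩ := exists_mulVec_eq_lambdaMin_smul hM
    have hvv : 0 < v ⬝ᵥ v := dotProduct_star_self_pos_iff.2 hv
    refine ⟨(v ⬝ᵥ v)⁻¹ • vecMulVec v v,
      ⟨(posSemidef_vecMulVec_self_star v).smul (inv_nonneg.2 hvv.le), ?_⟩, ?_⟩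
    · rw [trace_smul, trace_vecMulVec, smul_eq_mul, inv_mul_cancel₀ hvv.ne']
    · simp only [Matrix.mul_smul, trace_smul, mul_vecMulVec, hMv, trace_vecMulVec, smul_dotProduct,
        smul_eq_mul]
      field_simp
  · rintro _ ⟨Y, hY, rfl⟩
    have := trace_mul_nonneg_of_posSemidef (posSemidef_sub_lambdaMin_smul_one hM) hY.1
    rwa [trace_sub_smul_one_mul _ hY.2, sub_nonneg] at this

theorem mul_eq_lambdaMin_smul_of_trace_mul_le (hM : M.IsHermitian) (hY : Y ∈ spectraplex ι)
    (h : (M * Y).trace ≤ lambdaMin M) : M * Y = lambdaMin M • Y := by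
  classical
  have hpsd := posSemidef_sub_lambdaMin_smul_one hM
  have htrace : ((M - lambdaMin M • (1 : Matrix ι ι ℝ)) * Y).trace = 0 := by
    refine le_antisymm ?_ (trace_mul_nonneg_of_posSemidef hpsd hY.1)
    rwa [trace_sub_smul_one_mul _ hY.2, sub_nonpos]
  have hmul := mul_eq_zero_of_posSemidef_of_trace_mul_eq_zero hpsd hY.1 htrace
  rwa [Matrix.sub_mul, Matrix.smul_mul, Matrix.one_mul, sub_eq_zero] at hmul

end TraceMulSpectraplex

section Saddle

variable {E F : Type*}
  [TopologicalSpace E] [AddCommGroup E] [Module ℝ E] [IsTopologicalAddGroup E] [ContinuousSMul ℝ E]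
  [TopologicalSpace F] [AddCommGroup F] [Module ℝ F] [IsTopologicalAddGroup F] [ContinuousSMul ℝ F]

theorem exists_isSaddlePointOn_of_isMaxOn {X : Set E} {P : Set F} {f : E → F → ℝ} {m : F → ℝ}
    (hX : Convex ℝ X) (hXc : IsCompact X) (hP : Convex ℝ P) (hPc : IsCompact P)
    (hf : ∀ p ∈ P, LowerSemicontinuousOn (f · p) X) (hf' : ∀ p ∈ P, QuasiconvexOn ℝ X (f · p))
    (hg : ∀ x ∈ X, UpperSemicontinuousOn (f x) P) (hg' : ∀ x ∈ X, QuasiconcaveOn ℝ P (f x))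
    (hm : ∀ p ∈ P, IsLeast ((f · p) '' X) (m p)) {p₀ : F} (hp₀ : p₀ ∈ P) (hmax : IsMaxOn m P p₀) :
    ∃ x₀ ∈ X, IsSaddlePointOn X P f x₀ p₀ := by
  obtain ⟨x₀, hx₀, q, hq, hsaddle⟩ := Sion.exists_isSaddlePointOn
    (Set.image_nonempty.1 (hm p₀ hp₀).nonempty) hX hXc hf hf' hP ⟨p₀, hp₀⟩ hPc hg hg'
  refine ⟨x₀, hx₀, fun x hx p hp ↦ ?_⟩
  obtain ⟨x', hx', hfx'⟩ := (hm q hq).1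
  calc f x₀ p ≤ f x' q := hsaddle x' hx' p hp
    _ = m q := hfx'
    _ ≤ m p₀ := hmax hq
    _ ≤ f x p₀ := (hm p₀ hp₀).2 ⟨x, hx, rfl⟩

theorem exists_mem_spectraplex_isMaxOn_of_isMaxOn_lambdaMin {ι : Type} [Fintype ι] [Nonempty ι]
    {P : Set F} (hP : Convex ℝ P) (hPc : IsCompact P) {κ : ℝ} (hκ : 0 < κ)
    {D : F → Matrix ι ι ℝ} {g : F → ℝ} (hD : ∀ p ∈ P, (D p).IsHermitian)
    (hcont : ∀ Y ∈ spectraplex ι, UpperSemicontinuousOn (fun p ↦ κ * (D p * Y).trace + g p) P)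
    (hconc : ∀ Y ∈ spectraplex ι, QuasiconcaveOn ℝ P fun p ↦ κ * (D p * Y).trace + g p)
    {p₀ : F} (hp₀ : p₀ ∈ P) (hmax : IsMaxOn (fun p ↦ κ * lambdaMin (D p) + g p) P p₀) :
    ∃ Y ∈ spectraplex ι, D p₀ * Y = lambdaMin (D p₀) • Y ∧
      IsMaxOn (fun p ↦ κ * (D p * Y).trace + g p) P p₀ := by
  have hleast (p : F) (hp : p ∈ P) : IsLeast
      ((fun Y ↦ κ * (D p * Y).trace + g p) '' spectraplex ι) (κ * lambdaMin (D p) + g p) := by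
    have hmono : Monotone fun s ↦ κ * s + g p := (monotone_id.const_mul hκ.le).add_const _
    simpa only [Set.image_image] using hmono.map_isLeast (isLeast_trace_mul_spectraplex (hD p hp))
  obtain ⟨Y, hY, hsaddle⟩ := exists_isSaddlePointOn_of_isMaxOn
    (f := fun Y p ↦ κ * (D p * Y).trace + g p) convex_spectraplex isCompact_spectraplex hP hPc
    (fun p _ ↦ (by fun_prop : Continuous _).lowerSemicontinuous.lowerSemicontinuousOn _)
    (fun p _ ↦ ConvexOn.quasiconvexOn ⟨convex_spectraplex, fun X _ Y _ α β _ _ hαβ ↦ by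
      simp only [Matrix.mul_add, Matrix.mul_smul, trace_add, trace_smul, smul_eq_mul]
      exact le_of_eq (by linear_combination -(g p * hαβ))⟩)
    hcont hconc hleast hp₀ hmax
  obtain ⟨Y₀, hY₀, h₀⟩ := (hleast p₀ hp₀).1
  have htrace : (D p₀ * Y).trace ≤ lambdaMin (D p₀) := le_of_mul_le_mul_left
    (le_of_add_le_add_right ((hsaddle Y₀ hY₀ p₀ hp₀).trans_eq h₀)) hκ
  exact ⟨Y, hY, mul_eq_lambdaMin_smul_of_trace_mul_le (hD p₀ hp₀) hY htrace, hsaddle Y hY⟩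

end Saddle

section Dehomogenize

variable {ι : Type*}

/-- The dehomogenization `z₀ / y₀` of the vector `(y₀, z₀)`, as in `x* := z₀ / y₀`; it is only
meaningful when `y₀ ≠ 0`. -/
noncomputable def dehomogenize (v : Unit ⊕ ι → ℝ) : ι → ℝ :=
  fun i ↦ v (Sum.inr i) / v (Sum.inl ())

theorem dehomogenize_eq_smul (v : Unit ⊕ ι → ℝ) :
    dehomogenize v = (v (Sum.inl ()))⁻¹ • (v ∘ Sum.inr) :=
  funext fun _ ↦ div_eq_inv_mul _ _

theorem dotProduct_dehomogenize_col_self_le [Fintype ι] {Y : Matrix (Unit ⊕ ι) (Unit ⊕ ι) ℝ}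
    (hY : Y.PosSemidef) (hY₀ : 0 < Y (Sum.inl ()) (Sum.inl ())) :
    dehomogenize (Y.col (Sum.inl ())) ⬝ᵥ dehomogenize (Y.col (Sum.inl ())) ≤
      (Y.trace - Y (Sum.inl ()) (Sum.inl ())) / Y (Sum.inl ()) (Sum.inl ()) := by
  have htrace : Y.trace - Y (Sum.inl ()) (Sum.inl ()) = ∑ i, Y (Sum.inr i) (Sum.inr i) := by
    simp [Matrix.trace]
  rw [htrace, Finset.sum_div]
  refine Finset.sum_le_sum fun i _ ↦ ?_
  have hminor := sq_apply_le_mul_diag_of_posSemidef hY (Sum.inr i) (Sum.inl ())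
  simp only [dehomogenize, col_apply]
  rw [div_mul_div_comm, ← sq, div_le_div_iff₀ (mul_pos hY₀ hY₀) hY₀, ← mul_assoc]
  exact mul_le_mul_of_nonneg_right hminor hY₀.le

end Dehomogenize

section BorderD

variable {n : ℕ} {A : Matrix (Fin n) (Fin n) ℝ} {a : Fin n → ℝ} {t μ : ℝ}

theorem isHermitian_borderD (hA : A.IsHermitian) : (borderD A a t).IsHermitian :=
  IsHermitian.fromBlocks (by ext; simp) (by ext; simp) hA

theorem borderD_mulVec_comp_inr (v : Unit ⊕ Fin n → ℝ) :
    (borderD A a t *ᵥ v) ∘ Sum.inr = A *ᵥ (v ∘ Sum.inr) - v (Sum.inl ()) • a := by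
  ext i
  simp only [borderD, fromBlocks_mulVec, Function.comp_apply, Sum.elim_inr, Pi.add_apply,
    Pi.sub_apply, Pi.smul_apply, smul_eq_mul, mulVec, dotProduct, of_apply, Finset.univ_unique,
    Finset.sum_singleton, PUnit.default_eq_unit]
  ring

theorem sub_smul_one_mulVec_dehomogenize {v : Unit ⊕ Fin n → ℝ}
    (hv : borderD A a t *ᵥ v = μ • v) (hv₀ : v (Sum.inl ()) ≠ 0) :
    (A - μ • (1 : Matrix (Fin n) (Fin n) ℝ)) *ᵥ dehomogenize v = a := by
  have hinr : A *ᵥ (v ∘ Sum.inr) - μ • (v ∘ Sum.inr) = v (Sum.inl ()) • a := by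
    rw [sub_eq_iff_eq_add, ← sub_eq_iff_eq_add', ← borderD_mulVec_comp_inr (t := t), hv]
    rfl
  rw [dehomogenize_eq_smul, mulVec_smul, sub_mulVec, smul_mulVec, one_mulVec, hinr,
    inv_smul_smul₀ hv₀]

theorem trace_borderD_mul {Y : Matrix (Unit ⊕ Fin n) (Unit ⊕ Fin n) ℝ} (hY : Y.IsHermitian) :
    (borderD A a t * Y).trace = t * Y (Sum.inl ()) (Sum.inl ()) -
      2 * (a ⬝ᵥ Y.col (Sum.inl ()) ∘ Sum.inr) + (A * Y.toBlocks₂₂).trace := by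
  have hsymm (i : Fin n) : Y (Sum.inl ()) (Sum.inr i) = Y (Sum.inr i) (Sum.inl ()) :=
    hY.apply _ _
  simp only [Matrix.trace, borderD, diag_apply, Matrix.mul_apply, Fintype.sum_sum_type, dotProduct,
    hsymm, Finset.univ_unique, Finset.sum_singleton, fromBlocks_apply₁₁, fromBlocks_apply₁₂,
    fromBlocks_apply₂₁, fromBlocks_apply₂₂, of_apply, Finset.sum_add_distrib, neg_mul,
    Finset.sum_neg_distrib, toBlocks₂₂, Function.comp_apply, col_apply, PUnit.default_eq_unit]
  ring

theorem mul_trace_borderD2_mul_add_eq (b : Fin n → ℝ) (c Δ l : ℝ)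
    {Y : Matrix (Unit ⊕ Fin n) (Unit ⊕ Fin n) ℝ} (hY : Y.IsHermitian) :
    (Δ + 1) * (borderD2 A a b t l * Y).trace + (-t - l * c) =
      ((Δ + 1) * Y (Sum.inl ()) (Sum.inl ()) - 1) * t +
      ((Δ + 1) * (b ⬝ᵥ Y.col (Sum.inl ()) ∘ Sum.inr) - c) * l +
      (Δ + 1) * (borderD A a 0 * Y).trace := by
  have hsub : (fun j ↦ a j - l / 2 * b j) = a - (l / 2) • b := rfl
  rw [borderD2, hsub, trace_borderD_mul hY, trace_borderD_mul hY, sub_dotProduct, smul_dotProduct,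
    smul_eq_mul]
  ring

end BorderD

section KKT

variable {n : ℕ}

/-- The first-order conditions for eTRS at `x` with multipliers `-μ` for the ball and `l` for the
half-space, without complementary slackness for the ball: this is all that maximality of `ktl`
provides. -/
structure IsPreKKT (A : Matrix (Fin n) (Fin n) ℝ) (a b : Fin n → ℝ) (c Δ μ l : ℝ)
    (x : Fin n → ℝ) : Prop where
  stationary : (A - μ • (1 : Matrix (Fin n) (Fin n) ℝ)) *ᵥ x = a - (l / 2) • b
  norm_le : x ⬝ᵥ x ≤ Δ
  linear_le : b ⬝ᵥ x ≤ c
  linear_slack : l * (b ⬝ᵥ x - c) = 0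

/-- The Karush–Kuhn–Tucker conditions for eTRS at `x` with multipliers `-μ` for the ball and `l`
for the half-space, apart from the signs of the multipliers. -/
structure IsKKT (A : Matrix (Fin n) (Fin n) ℝ) (a b : Fin n → ℝ) (c Δ μ l : ℝ)
    (x : Fin n → ℝ) : Prop extends IsPreKKT A a b c Δ μ l x where
  norm_slack : μ * (x ⬝ᵥ x - Δ) = 0

variable {A : Matrix (Fin n) (Fin n) ℝ} {a b x : Fin n → ℝ} {c Δ μ l l₁ l₂ : ℝ}

theorem lagr_le_objQ (hl₁ : 0 ≤ l₁) (hl₂ : 0 ≤ l₂) (hxΔ : x ⬝ᵥ x ≤ Δ) (hxc : b ⬝ᵥ x ≤ c) :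
    lagr A a b c Δ x l₁ l₂ ≤ objQ A a x := by
  have hball := mul_nonpos_of_nonneg_of_nonpos hl₁ (sub_nonpos.2 hxΔ)
  have hhalf := mul_nonpos_of_nonneg_of_nonpos hl₂ (sub_nonpos.2 hxc)
  unfold lagr
  linarith

theorem isOptimal_of_forall_objQ_le_lagr (hl₁ : 0 ≤ l₁) (hl₂ : 0 ≤ l₂) (hxΔ : x ⬝ᵥ x ≤ Δ)
    (hxc : b ⬝ᵥ x ≤ c) (h : ∀ y, objQ A a x ≤ lagr A a b c Δ y l₁ l₂) :
    isOptimal A a b c Δ x :=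
  ⟨hxΔ, hxc, fun y hyΔ hyc ↦ (h y).trans (lagr_le_objQ hl₁ hl₂ hyΔ hyc)⟩

theorem pstar_eq_objQ (hx : isOptimal A a b c Δ x) : pstar A a b c Δ = objQ A a x :=
  IsLeast.csInf_eq ⟨⟨x, hx.1, hx.2.1, rfl⟩, fun _ ⟨y, hyΔ, hyc, hv⟩ ↦ hv ▸ hx.2.2 y hyΔ hyc⟩

theorem dstar_eq_objQ (hl₁ : 0 ≤ l₁) (hl₂ : 0 ≤ l₂) (hxΔ : x ⬝ᵥ x ≤ Δ)
    (hxc : b ⬝ᵥ x ≤ c) (h : ∀ y, objQ A a x ≤ lagr A a b c Δ y l₁ l₂) :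
    dstar A a b c Δ = objQ A a x :=
  IsGreatest.csSup_eq ⟨⟨l₁, l₂, hl₁, hl₂, h⟩, fun _ ⟨_, _, hk₁, hk₂, hv⟩ ↦
    (hv x).trans (lagr_le_objQ hk₁ hk₂ hxΔ hxc)⟩

theorem objQ_add (hA : A.IsHermitian) (x d : Fin n → ℝ) :
    objQ A a (x + d) = objQ A a x + 2 * (d ⬝ᵥ (A *ᵥ x - a)) + d ⬝ᵥ A *ᵥ d := by
  have hsymm : x ⬝ᵥ A *ᵥ d = d ⬝ᵥ A *ᵥ x := by
    rw [dotProduct_mulVec, ← mulVec_transpose, dotProduct_comm, (isHermitian_iff_isSymm.1 hA).eq]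
  simp only [objQ, mulVec_add, add_dotProduct, dotProduct_add, dotProduct_sub, hsymm,
    dotProduct_comm d a]
  ring

theorem lagr_add_of_stationary (hA : A.IsHermitian)
    (hx : (A - μ • (1 : Matrix (Fin n) (Fin n) ℝ)) *ᵥ x = a - (l / 2) • b) (d : Fin n → ℝ) :
    lagr A a b c Δ (x + d) (-μ) l =
      lagr A a b c Δ x (-μ) l + d ⬝ᵥ (A - μ • (1 : Matrix (Fin n) (Fin n) ℝ)) *ᵥ d := by
  have hgrad : d ⬝ᵥ (A *ᵥ x - a) = μ * (d ⬝ᵥ x) - l / 2 * (b ⬝ᵥ d) := by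
    have hAx : A *ᵥ x - a = μ • x - (l / 2) • b := by
      rw [sub_mulVec, smul_mulVec, one_mulVec] at hx
      rw [eq_add_of_sub_eq hx]
      abel
    rw [hAx, dotProduct_sub, dotProduct_smul, dotProduct_smul, smul_eq_mul, smul_eq_mul,
      dotProduct_comm d b]
  simp only [lagr, objQ_add hA, hgrad, sub_mulVec, smul_mulVec, one_mulVec, add_dotProduct,
    dotProduct_add, dotProduct_sub, dotProduct_smul, smul_eq_mul, dotProduct_comm x d]
  ring

namespace IsKKT

theorem lagr_eq_objQ (hx : IsKKT A a b c Δ μ l x) : lagr A a b c Δ x (-μ) l = objQ A a x := by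
  rw [lagr, neg_mul, hx.norm_slack, hx.linear_slack, neg_zero, add_zero, add_zero]

theorem objQ_le_lagr (hA : (A - μ • (1 : Matrix (Fin n) (Fin n) ℝ)).PosSemidef)
    (hx : IsKKT A a b c Δ μ l x) (y : Fin n → ℝ) : objQ A a x ≤ lagr A a b c Δ y (-μ) l := by
  have hA' : A.IsHermitian := by
    simpa using hA.isHermitian.add (isHermitian_one.smul (IsSelfAdjoint.all μ))
  rw [← add_sub_cancel x y, lagr_add_of_stationary hA' hx.stationary, hx.lagr_eq_objQ]
  exact le_add_of_nonneg_right (hA.dotProduct_mulVec_nonneg (y - x))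

theorem isOptimal_and_pstar_eq_dstar
    (hA : (A - μ • (1 : Matrix (Fin n) (Fin n) ℝ)).PosSemidef) (hμ : μ ≤ 0) (hl : 0 ≤ l)
    (hx : IsKKT A a b c Δ μ l x) : isOptimal A a b c Δ x ∧ pstar A a b c Δ = dstar A a b c Δ := by
  have hopt := isOptimal_of_forall_objQ_le_lagr (neg_nonneg.2 hμ) hl hx.norm_le hx.linear_le
    (hx.objQ_le_lagr hA)
  exact ⟨hopt, (pstar_eq_objQ hopt).trans (dstar_eq_objQ (neg_nonneg.2 hμ) hl hx.norm_le
    hx.linear_le (hx.objQ_le_lagr hA)).symm⟩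

end IsKKT

end KKT

section Maximizer

theorem concaveOn_mul_fst_add_mul_snd_add {s : Set (ℝ × ℝ)} (hs : Convex ℝ s) (α β r : ℝ) :
    ConcaveOn ℝ s fun p ↦ α * p.1 + β * p.2 + r :=
  ((α • LinearMap.fst ℝ ℝ ℝ + β • LinearMap.snd ℝ ℝ ℝ).concaveOn hs).add_const r

-- The minimax argument needs a compact parameter set, hence a box in place of `ℝ × [0, ∞)`.
theorem coeffs_of_isMaxOn_affine {α β r t₀ l₀ : ℝ} (hl₀ : 0 ≤ l₀)
    (h : IsMaxOn (fun p : ℝ × ℝ ↦ α * p.1 + β * p.2 + r)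
      (Set.Icc (t₀ - 1) (t₀ + 1) ×ˢ Set.Icc 0 (l₀ + 1)) (t₀, l₀)) :
    α = 0 ∧ β ≤ 0 ∧ l₀ * β = 0 := by
  have hle (t l : ℝ) (ht : t ∈ Set.Icc (t₀ - 1) (t₀ + 1)) (hl : l ∈ Set.Icc 0 (l₀ + 1)) :
      α * t + β * l + r ≤ α * t₀ + β * l₀ + r := h (Set.mk_mem_prod ht hl)
  have ht_mem : t₀ ∈ Set.Icc (t₀ - 1) (t₀ + 1) := ⟨by linarith, by linarith⟩
  have hl_mem : l₀ ∈ Set.Icc 0 (l₀ + 1) := ⟨hl₀, by linarith⟩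
  have hright := hle (t₀ + 1) l₀ ⟨by linarith, le_rfl⟩ hl_mem
  have hleft := hle (t₀ - 1) l₀ ⟨le_rfl, by linarith⟩ hl_mem
  have hup := hle t₀ (l₀ + 1) ht_mem ⟨by linarith, le_rfl⟩
  have hzero := hle t₀ 0 ht_mem ⟨le_rfl, by linarith⟩
  have hβ : β ≤ 0 := by linarith
  exact ⟨by linarith, hβ, le_antisymm (mul_nonpos_of_nonneg_of_nonpos hl₀ hβ) (by linarith)⟩

variable {n : ℕ} {A : Matrix (Fin n) (Fin n) ℝ} {a b : Fin n → ℝ} {c Δ t₀ l₀ : ℝ}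

theorem exists_mem_spectraplex_of_forall_ktl_le (hA : A.IsHermitian) (hΔ : 0 ≤ Δ) (hl₀ : 0 ≤ l₀)
    (hmax : ∀ t l, 0 ≤ l → ktl A a b c Δ t l ≤ ktl A a b c Δ t₀ l₀) :
    ∃ Y ∈ spectraplex (Unit ⊕ Fin n),
      borderD2 A a b t₀ l₀ * Y = lambdaMin (borderD2 A a b t₀ l₀) • Y ∧
      (Δ + 1) * Y (Sum.inl ()) (Sum.inl ()) = 1 ∧
      (Δ + 1) * (b ⬝ᵥ Y.col (Sum.inl ()) ∘ Sum.inr) ≤ c ∧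
      l₀ * ((Δ + 1) * (b ⬝ᵥ Y.col (Sum.inl ()) ∘ Sum.inr) - c) = 0 := by
  have haffine {Y} (hY : Y ∈ spectraplex (Unit ⊕ Fin n)) (p : ℝ × ℝ) :=
    mul_trace_borderD2_mul_add_eq (A := A) (a := a) (t := p.1) b c Δ p.2 hY.1.isHermitian
  have hbox : Convex ℝ (Set.Icc (t₀ - 1) (t₀ + 1) ×ˢ Set.Icc 0 (l₀ + 1)) :=
    (convex_Icc _ _).prod (convex_Icc _ _)
  obtain ⟨Y, hY, hDY, hYmax⟩ := exists_mem_spectraplex_isMaxOn_of_isMaxOn_lambdaMin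
    (D := fun p : ℝ × ℝ ↦ borderD2 A a b p.1 p.2) (g := fun p ↦ -p.1 - p.2 * c) (p₀ := (t₀, l₀))
    hbox (isCompact_Icc.prod isCompact_Icc) (add_pos_of_nonneg_of_pos hΔ one_pos)
    (fun p _ ↦ isHermitian_borderD hA)
    (fun Y hY ↦ by
      simp only [haffine hY]
      exact (by fun_prop : Continuous _).upperSemicontinuous.upperSemicontinuousOn _)
    (fun Y hY ↦ by
      simp only [haffine hY]
      exact (concaveOn_mul_fst_add_mul_snd_add hbox _ _ _).quasiconcaveOn)
    ⟨⟨by linarith, by linarith⟩, hl₀, by linarith⟩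
    (isMaxOn_iff.2 fun p hp ↦ by
      simpa only [ktl, sub_eq_add_neg, add_assoc] using hmax p.1 p.2 hp.2.1)
  simp only [haffine hY] at hYmax
  obtain ⟨hα, hβ, hslack⟩ := coeffs_of_isMaxOn_affine hl₀ hYmax
  exact ⟨Y, hY, hDY, sub_eq_zero.1 hα, sub_nonpos.1 hβ, hslack⟩

theorem exists_isPreKKT_of_forall_ktl_le (hA : A.IsHermitian) (hΔ : 0 ≤ Δ) (hl₀ : 0 ≤ l₀)
    (hmax : ∀ t l, 0 ≤ l → ktl A a b c Δ t l ≤ ktl A a b c Δ t₀ l₀) :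
    ∃ x, IsPreKKT A a b c Δ (lambdaMin (borderD2 A a b t₀ l₀)) l₀ x := by
  obtain ⟨Y, hY, hDY, hY₀, hle, hslack⟩ :=
    exists_mem_spectraplex_of_forall_ktl_le hA hΔ hl₀ hmax
  have hY₀_eq : Y (Sum.inl ()) (Sum.inl ()) = (Δ + 1)⁻¹ := eq_inv_of_mul_eq_one_right hY₀
  have hY₀_pos : 0 < Y (Sum.inl ()) (Sum.inl ()) := hY₀_eq ▸ inv_pos.2 (by linarith)
  have hb : b ⬝ᵥ dehomogenize (Y.col (Sum.inl ())) =
      (Δ + 1) * (b ⬝ᵥ Y.col (Sum.inl ()) ∘ Sum.inr) := by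
    rw [dehomogenize_eq_smul, dotProduct_smul, col_apply, hY₀_eq, inv_inv, smul_eq_mul]
  have hcol : borderD2 A a b t₀ l₀ *ᵥ Y.col (Sum.inl ()) =
      lambdaMin (borderD2 A a b t₀ l₀) • Y.col (Sum.inl ()) :=
    congrArg (fun M ↦ M.col (Sum.inl ())) hDY
  refine ⟨dehomogenize (Y.col (Sum.inl ())), ?_, ?_, hb ▸ hle, hb ▸ hslack⟩
  · exact sub_smul_one_mulVec_dehomogenize hcol hY₀_pos.ne'
  · refine (dotProduct_dehomogenize_col_self_le hY.1 hY₀_pos).trans_eq ?_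
    rw [hY.2, hY₀_eq]
    field_simp
    ring

end Maximizer

section Slide

variable {ι : Type*} [Fintype ι]

theorem exists_pos_mul_sq_add_mul_eq {q h e : ℝ} (hq : 0 < q) (he : 0 < e) :
    ∃ α, 0 < α ∧ q * α ^ 2 + 2 * h * α = e := by
  have hqe : 0 < q * e := mul_pos hq he
  have hlt : h < √(h ^ 2 + q * e) := Real.lt_sqrt_of_sq_lt (by linarith)
  refine ⟨(√(h ^ 2 + q * e) - h) / q, div_pos (sub_pos.2 hlt) hq, ?_⟩
  have hsq : √(h ^ 2 + q * e) ^ 2 = h ^ 2 + q * e := Real.sq_sqrt (by positivity)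
  field_simp
  linear_combination hsq

theorem exists_pos_dotProduct_self_add_smul_eq {x d : ι → ℝ} {Δ : ℝ} (hd : d ≠ 0)
    (hx : x ⬝ᵥ x < Δ) : ∃ α : ℝ, 0 < α ∧ (x + α • d) ⬝ᵥ (x + α • d) = Δ := by
  obtain ⟨α, hα, hroot⟩ := exists_pos_mul_sq_add_mul_eq (h := x ⬝ᵥ d)
    (dotProduct_star_self_pos_iff.2 hd : 0 < d ⬝ᵥ d) (sub_pos.2 hx)
  refine ⟨α, hα, ?_⟩
  simp only [add_dotProduct, dotProduct_add, smul_dotProduct, dotProduct_smul, smul_eq_mul,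
    dotProduct_comm d x]
  linear_combination hroot

theorem exists_mem_ne_zero_dotProduct_nonpos {N : Submodule ℝ (ι → ℝ)} (hN : N ≠ ⊥) (b : ι → ℝ) :
    ∃ d ∈ N, d ≠ 0 ∧ b ⬝ᵥ d ≤ 0 := by
  obtain ⟨u, hu, hu₀⟩ := N.exists_mem_ne_zero_of_ne_bot hN
  rcases le_total (b ⬝ᵥ u) 0 with h | h
  · exact ⟨u, hu, hu₀, h⟩
  · exact ⟨-u, N.neg_mem hu, neg_ne_zero.2 hu₀, by rwa [dotProduct_neg, neg_nonpos]⟩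

theorem exists_mem_ne_zero_dotProduct_eq_zero {K : Type*} [Field K] {N : Submodule K (ι → K)}
    (hN : 1 < Module.finrank K N) (b : ι → K) : ∃ d ∈ N, d ≠ 0 ∧ b ⬝ᵥ d = 0 := by
  have hker : LinearMap.ker ((dotProductBilin K K b).domRestrict N) ≠ ⊥ :=
    LinearMap.ker_ne_bot_of_finrank_lt (by simpa using hN)
  obtain ⟨⟨d, hdN⟩, hd, hd₀⟩ := Submodule.exists_mem_ne_zero_of_ne_bot hker
  exact ⟨d, hdN, fun h ↦ hd₀ (Subtype.ext h), hd⟩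

end Slide

section Exceptional

variable {n : ℕ}

/-- The configuration excluded by the theorem: `lambdaMin A` is a simple negative eigenvalue, the
multiplier `l` of the half-space is positive, and the stationarity system has two solutions on the
sphere, strictly on opposite sides of the hyperplane `b ⬝ᵥ x = c`. -/
def IsExceptional (A : Matrix (Fin n) (Fin n) ℝ) (a b : Fin n → ℝ) (c Δ l : ℝ) : Prop :=
  lambdaMin A < 0 ∧ eigMult A = 1 ∧ 0 < l ∧
    ∃ x1 x2 : Fin n → ℝ,
      (A - lambdaMin A • (1 : Matrix (Fin n) (Fin n) ℝ)) *ᵥ x1 = a - (l / 2) • b ∧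
      (A - lambdaMin A • (1 : Matrix (Fin n) (Fin n) ℝ)) *ᵥ x2 = a - (l / 2) • b ∧
      x1 ⬝ᵥ x1 = Δ ∧ x2 ⬝ᵥ x2 = Δ ∧ (b ⬝ᵥ x1 - c) * (b ⬝ᵥ x2 - c) < 0

variable {A : Matrix (Fin n) (Fin n) ℝ} {a b x d : Fin n → ℝ} {c Δ μ l : ℝ}

theorem ker_sub_lambdaMin_ne_bot [Nonempty (Fin n)] (hA : A.IsHermitian) :
    LinearMap.ker (A - lambdaMin A • (1 : Matrix (Fin n) (Fin n) ℝ)).mulVecLin ≠ ⊥ := by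
  obtain ⟨v, hv₀, hv⟩ := exists_mulVec_eq_lambdaMin_smul hA
  refine (Submodule.ne_bot_iff _).2 ⟨v, ?_, hv₀⟩
  rw [LinearMap.mem_ker, mulVecLin_apply, sub_mulVec, smul_mulVec, one_mulVec, hv, sub_self]

namespace IsPreKKT

theorem stationary_add_smul (hx : IsPreKKT A a b c Δ μ l x)
    (hd : (A - μ • (1 : Matrix (Fin n) (Fin n) ℝ)) *ᵥ d = 0) (α : ℝ) :
    (A - μ • (1 : Matrix (Fin n) (Fin n) ℝ)) *ᵥ (x + α • d) = a - (l / 2) • b := by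
  rw [mulVec_add, mulVec_smul, hd, smul_zero, add_zero, hx.stationary]

theorem exists_isKKT_of_mulVec_eq_zero (hx : IsPreKKT A a b c Δ μ l x) (hxΔ : x ⬝ᵥ x < Δ)
    (hd₀ : d ≠ 0) (hd : (A - μ • (1 : Matrix (Fin n) (Fin n) ℝ)) *ᵥ d = 0) (hbd : b ⬝ᵥ d ≤ 0)
    (hlbd : l * (b ⬝ᵥ d) = 0) : ∃ x', IsKKT A a b c Δ μ l x' := by
  obtain ⟨α, hα, hsphere⟩ := exists_pos_dotProduct_self_add_smul_eq hd₀ hxΔ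
  have hb : b ⬝ᵥ (x + α • d) = b ⬝ᵥ x + α * (b ⬝ᵥ d) := by
    rw [dotProduct_add, dotProduct_smul, smul_eq_mul]
  refine ⟨x + α • d, ⟨hx.stationary_add_smul hd α, hsphere.le, ?_, ?_⟩, ?_⟩
  · exact hb ▸ (add_le_of_nonpos_right (mul_nonpos_of_nonneg_of_nonpos hα.le hbd)).trans
      hx.linear_le
  · rw [hb]
    linear_combination hx.linear_slack + α * hlbd
  · rw [hsphere, sub_self, mul_zero]

theorem isExceptional (hx : IsPreKKT A a b c Δ (lambdaMin A) l x) (hxΔ : x ⬝ᵥ x < Δ)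
    (hμ : lambdaMin A < 0) (hmult : eigMult A = 1) (hl : 0 < l)
    (hd : (A - lambdaMin A • (1 : Matrix (Fin n) (Fin n) ℝ)) *ᵥ d = 0) (hbd : b ⬝ᵥ d ≠ 0) :
    IsExceptional A a b c Δ l := by
  have hd₀ : d ≠ 0 := by
    rintro rfl
    exact hbd (dotProduct_zero b)
  have hneg : (A - lambdaMin A • (1 : Matrix (Fin n) (Fin n) ℝ)) *ᵥ (-d) = 0 := by
    rw [mulVec_neg, hd, neg_zero]
  have hbx : b ⬝ᵥ x = c := sub_eq_zero.1 ((mul_eq_zero_iff_left hl.ne').1 hx.linear_slack)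
  obtain ⟨α, hα, hα_sphere⟩ := exists_pos_dotProduct_self_add_smul_eq hd₀ hxΔ
  obtain ⟨β, hβ, hβ_sphere⟩ := exists_pos_dotProduct_self_add_smul_eq (neg_ne_zero.2 hd₀) hxΔ
  refine ⟨hμ, hmult, hl, x + α • d, x + β • -d, hx.stationary_add_smul hd α,
    hx.stationary_add_smul hneg β, hα_sphere, hβ_sphere, ?_⟩
  have hpos : 0 < α * β * (b ⬝ᵥ d) ^ 2 := by positivity
  simp only [dotProduct_add, dotProduct_smul, dotProduct_neg, smul_eq_mul, hbx]
  linarith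

theorem exists_isKKT_of_not_isExceptional [Nonempty (Fin n)] (hA : A.IsHermitian)
    (hx : IsPreKKT A a b c Δ (lambdaMin A) l x) (hμ : lambdaMin A ≤ 0) (hl : 0 ≤ l)
    (hexc : ¬ IsExceptional A a b c Δ l) : ∃ x', IsKKT A a b c Δ (lambdaMin A) l x' := by
  rcases hμ.eq_or_lt with hμ | hμ
  · exact ⟨x, hx, by rw [hμ, zero_mul]⟩
  rcases hx.norm_le.eq_or_lt with hxΔ | hxΔ
  · exact ⟨x, hx, by rw [hxΔ, sub_self, mul_zero]⟩
  have hker := ker_sub_lambdaMin_ne_bot hA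
  by_cases hmult : eigMult A = 1
  · obtain ⟨d, hd, hd₀, hbd⟩ := exists_mem_ne_zero_dotProduct_nonpos hker b
    refine hx.exists_isKKT_of_mulVec_eq_zero hxΔ hd₀ hd hbd (by_contra fun hlbd ↦ hexc ?_)
    obtain ⟨hl₀, hbd₀⟩ := mul_ne_zero_iff.1 hlbd
    exact hx.isExceptional hxΔ hμ hmult (hl.lt_of_ne' hl₀) hd hbd₀
  · have hfinrank : 1 < eigMult A :=
      (Submodule.one_le_finrank_iff.2 hker).lt_of_ne' hmult
    obtain ⟨d, hd, hd₀, hbd⟩ := exists_mem_ne_zero_dotProduct_eq_zero hfinrank b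
    exact hx.exists_isKKT_of_mulVec_eq_zero hxΔ hd₀ hd hbd.le (by rw [hbd, mul_zero])

end IsPreKKT

end Exceptional

theorem stmt12_general {n : ℕ} {A : Matrix (Fin n) (Fin n) ℝ} (hA : A.IsHermitian)
    (hnpd : ¬ A.PosDef) {a b : Fin n → ℝ} {c Δ : ℝ} (hΔ : 0 ≤ Δ) {ts ls : ℝ} (hls : 0 ≤ ls)
    (hmax : ∀ t l : ℝ, 0 ≤ l → ktl A a b c Δ t l ≤ ktl A a b c Δ ts ls)
    (heq : lambdaMin (borderD2 A a b ts ls) = lambdaMin A) {y : Unit ⊕ Fin n → ℝ}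
    (hy : borderD2 A a b ts ls *ᵥ y = lambdaMin (borderD2 A a b ts ls) • y)
    (hy0 : y (Sum.inl ()) ≠ 0) (hexc : ¬ IsExceptional A a b c Δ ls) :
    pstar A a b c Δ = dstar A a b c Δ ∧
    ∃ z : Fin n → ℝ, (A - lambdaMin A • (1 : Matrix (Fin n) (Fin n) ℝ)) *ᵥ z = 0 ∧
      isOptimal A a b c Δ (dehomogenize y + z) := by
  have hne : Nonempty (Fin n) := by
    by_contra h
    rw [not_nonempty_iff] at h
    exact hnpd (Subsingleton.elim 1 A ▸ PosDef.one)
  have hμ := lambdaMin_nonpos_of_not_posDef hA hnpd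
  rw [heq] at hy
  obtain ⟨x₀, hx₀⟩ := exists_isPreKKT_of_forall_ktl_le hA hΔ hls hmax
  rw [heq] at hx₀
  obtain ⟨x, hx⟩ := hx₀.exists_isKKT_of_not_isExceptional hA hμ hls hexc
  obtain ⟨hopt, hdual⟩ :=
    hx.isOptimal_and_pstar_eq_dstar (posSemidef_sub_lambdaMin_smul_one hA) hμ hls
  refine ⟨hdual, x - dehomogenize y, ?_, by rwa [add_sub_cancel]⟩
  rw [mulVec_sub, hx.stationary, sub_smul_one_mulVec_dehomogenize hy hy0]
  exact sub_self _

/-- Theorem 4, item 2.2. -/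
theorem stmt12 {n : ℕ} (hn : 1 ≤ n) (A : Matrix (Fin n) (Fin n) ℝ) (hA : A.IsHermitian)
    (hnpd : ¬ A.PosDef) (a b : Fin n → ℝ) (c Δ : ℝ) (hΔ : 0 < Δ)
    (hslater : ∃ x : Fin n → ℝ, x ⬝ᵥ x < Δ ∧ b ⬝ᵥ x < c)
    (ts ls : ℝ) (hls : 0 ≤ ls)
    (hmax : ∀ t l : ℝ, 0 ≤ l → ktl A a b c Δ t l ≤ ktl A a b c Δ ts ls)
    (heq : lambdaMin (borderD2 A a b ts ls) = lambdaMin A)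
    (y : Unit ⊕ Fin n → ℝ) (hy1 : y ⬝ᵥ y = 1)
    (hy : (borderD2 A a b ts ls).mulVec y = lambdaMin (borderD2 A a b ts ls) • y)
    (hy0 : y (Sum.inl ()) ≠ 0)
    (hnot : ¬ (lambdaMin A < 0 ∧ eigMult A = 1 ∧ 0 < ls ∧
      ∃ x1 x2 : Fin n → ℝ,
        (A - lambdaMin A • (1 : Matrix (Fin n) (Fin n) ℝ)).mulVec x1 = a - (ls / 2) • b ∧
        (A - lambdaMin A • (1 : Matrix (Fin n) (Fin n) ℝ)).mulVec x2 = a - (ls / 2) • b ∧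
        x1 ⬝ᵥ x1 = Δ ∧ x2 ⬝ᵥ x2 = Δ ∧ (b ⬝ᵥ x1 - c) * (b ⬝ᵥ x2 - c) < 0)) :
    pstar A a b c Δ = dstar A a b c Δ ∧
    ∃ z : Fin n → ℝ,
      (A - lambdaMin A • (1 : Matrix (Fin n) (Fin n) ℝ)).mulVec z = 0 ∧
      isOptimal A a b c Δ ((fun i => y (Sum.inr i) / y (Sum.inl ())) + z) :=
  stmt12_general hA hnpd hΔ.le hls hmax heq hy hy0 hnot
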